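/- For all integers n ≥ 1 and m ≥ 2, the number of fuzzy topologies on an n-element set X with membership values in an m-element chain M having exactly 4 open sets is τ_F(n, m, 4) = (m(m+1)/2)^n − 3·m^n + 2^(n−1) + 2. -/

import Mathlib

/-- A fuzzy topology on `Fin n` with membership values in the `m`-element chain `Fin m`:
a collection of fuzzy sets (functions `Fin n → Fin m`) containing the constant function
with the least value, the constant function with the greatest value, and closed under
pointwise (binary) supremum and infimum. -/
def IsFuzzyTopology {n m : ℕ} (hm : m ≠ 0) (τ : Finset (Fin n → Fin m)) : Prop :=
  (fun _ => (⟨0, Nat.pos_of_ne_zero hm⟩ : Fin m)) ∈ τ ∧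
  (fun _ => (⟨m - 1, by omega⟩ : Fin m)) ∈ τ ∧
  (∀ f ∈ τ, ∀ g ∈ τ, f ⊔ g ∈ τ) ∧
  (∀ f ∈ τ, ∀ g ∈ τ, f ⊓ g ∈ τ)

/-- `tauF n m k hm` is the number of fuzzy topologies on an `n`-element set with values in an
`m`-element chain having exactly `k` open sets. -/
noncomputable def tauF (n m k : ℕ) (hm : m ≠ 0) : ℕ :=
  Nat.card {τ : Finset (Fin n → Fin m) // IsFuzzyTopology hm τ ∧ τ.card = k}

/-- `biTauF n m k hm` is the number of fuzzy bitopological spaces (unordered pairs of fuzzy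
topologies, allowing equal ones) on an `n`-element set with values in an `m`-element chain in
which both topologies have exactly `k` open sets. -/
noncomputable def biTauF (n m k : ℕ) (hm : m ≠ 0) : ℕ :=
  Nat.card (Sym2 {τ : Finset (Fin n → Fin m) // IsFuzzyTopology hm τ ∧ τ.card = k})

open Finset in
/-- Pairs of distinct nontrivial elements that are comparable or complementary. -/
theorem aux_double {α : Type*} [Lattice α] [BoundedOrder α] [Fintype α] [Nontrivial α]
    [DecidableEq α] (S : Finset (Finset α)) (P : Finset (α × α))
    (hS : ∀ τ, τ ∈ S ↔ ((⊥ ∈ τ ∧ ⊤ ∈ τ ∧ (∀ f ∈ τ, ∀ g ∈ τ, f ⊔ g ∈ τ) ∧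
      (∀ f ∈ τ, ∀ g ∈ τ, f ⊓ g ∈ τ)) ∧ τ.card = 4))
    (hP : ∀ p, p ∈ P ↔ (p.1 ≠ p.2 ∧ p.1 ≠ ⊥ ∧ p.1 ≠ ⊤ ∧ p.2 ≠ ⊥ ∧ p.2 ≠ ⊤ ∧
      (p.1 ≤ p.2 ∨ p.2 ≤ p.1 ∨ IsCompl p.1 p.2))) :
    P.card = 2 * S.card := by
  have hbt : (⊥ : α) ≠ ⊤ := bot_ne_top
  have key : Set.MapsTo (fun p : α × α => ({⊥, ⊤, p.1, p.2} : Finset α)) P S := by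
    rintro ⟨f, g⟩ hp
    obtain ⟨h1, h2, h3, h4, h5, h6⟩ := (hP _).1 hp
    simp only at h1 h2 h3 h4 h5 h6
    refine (hS _).2 ⟨⟨by simp, by simp, ?_, ?_⟩, ?_⟩
    · intro a ha b hb
      simp only [mem_insert, mem_singleton] at ha hb ⊢
      rcases ha with rfl | rfl | rfl | rfl <;> rcases hb with rfl | rfl | rfl | rfl <;>
      rcases h6 with h6 | h6 | h6 <;>
        first
        | (simp; done)
        | (simp [h6]; done)
        | (simp [h6.sup_eq_top]; done)
        | (simp [h6.symm.sup_eq_top]; done)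
    · intro a ha b hb
      simp only [mem_insert, mem_singleton] at ha hb ⊢
      rcases ha with rfl | rfl | rfl | rfl <;> rcases hb with rfl | rfl | rfl | rfl <;>
      rcases h6 with h6 | h6 | h6 <;>
        first
        | (simp; done)
        | (simp [h6]; done)
        | (simp [h6.inf_eq_bot]; done)
        | (simp [h6.symm.inf_eq_bot]; done)
    · rw [card_insert_of_notMem, card_insert_of_notMem, card_pair h1]
      · simp [h3.symm, h5.symm]
      · simp [h2.symm, h4.symm, hbt]
  rw [card_eq_sum_card_fiberwise key]
  rw [sum_const_nat (m := 2), mul_comm]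
  intro τ hτ
  obtain ⟨⟨hb, ht, hs, hi⟩, hc⟩ := (hS _).1 hτ
  have hcard : ((τ.erase ⊥).erase ⊤).card = 2 := by
    rw [card_erase_of_mem (by simp [ht]), card_erase_of_mem hb, hc]
  have : P.filter (fun p => ({⊥, ⊤, p.1, p.2} : Finset α) = τ) =
      ((τ.erase ⊥).erase ⊤).offDiag := by
    ext ⟨f, g⟩
    simp only [mem_filter, hP, mem_offDiag, mem_erase]
    constructor
    · rintro ⟨⟨h1, h2, h3, h4, h5, h6⟩, rfl⟩
      simp [*]
    · rintro ⟨⟨h3, h2, hf⟩, ⟨h5, h4, hg⟩, h1⟩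
      have heq : ({⊥, ⊤, f, g} : Finset α) = τ := by
        apply eq_of_subset_of_card_le
        · intro x hx
          simp only [mem_insert, mem_singleton] at hx
          rcases hx with rfl | rfl | rfl | rfl <;> assumption
        · rw [hc, card_insert_of_notMem, card_insert_of_notMem, card_pair h1]
          · simp [h3.symm, h5.symm]
          · simp [h2.symm, h4.symm, hbt]
      refine ⟨⟨h1, h2, h3, h4, h5, ?_⟩, heq⟩
      have a := hs f hf g hg
      have b := hi f hf g hg
      rw [← heq] at a b
      simp only [mem_insert, mem_singleton, sup_eq_left, sup_eq_right, inf_eq_left,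
        inf_eq_right, sup_eq_bot_iff, inf_eq_top_iff, h2, h3, false_and, false_or] at a b
      rcases a with a | a | a
      · rcases b with b | b | b
        · exact Or.inr (Or.inr ⟨disjoint_iff.2 b, codisjoint_iff.2 a⟩)
        · exact Or.inl b
        · exact Or.inr (Or.inl b)
      · exact Or.inr (Or.inl a)
      · exact Or.inl a
  rw [this, offDiag_card, hcard]

open Finset in
theorem aux_chain {α : Type*} [PartialOrder α] [BoundedOrder α] [Fintype α] [Nontrivial α]
    [DecidableEq α] (L A : Finset (α × α)) (hL : ∀ p, p ∈ L ↔ p.1 ≤ p.2)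
    (hA : ∀ p, p ∈ A ↔ p.1 ≠ ⊥ ∧ p.2 ≠ ⊤ ∧ p.1 < p.2) :
    L.card + 3 = A.card + 3 * Fintype.card α := by
  have hbt : (⊥ : α) ≠ ⊤ := bot_ne_top
  have h1 : L = A ∪ (univ.image (fun g : α => ((⊥ : α), g)) ∪
      ((univ.erase (⊥ : α)).image (fun f => (f, (⊤ : α))) ∪
        ((univ.erase (⊥ : α)).erase ⊤).image (fun f => (f, f)))) := by
    ext ⟨f, g⟩
    simp only [hL, mem_union, hA, mem_image, mem_univ, true_and, mem_erase, Prod.mk.injEq,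
      and_true]
    constructor
    · intro h
      by_cases hf : f = ⊥
      · subst hf; simp
      by_cases hg : g = ⊤
      · subst hg; simp [hf]
      rcases h.eq_or_lt with rfl | h
      · simp [hf, hg]
      · simp [hf, hg, h]
    · rintro (h | ⟨a, rfl, rfl⟩ | ⟨a, ha, rfl, rfl⟩ | ⟨a, ha, rfl, rfl⟩)
      · exact h.2.2.le
      all_goals simp
  rw [h1, card_union_of_disjoint, card_union_of_disjoint, card_union_of_disjoint,
    card_image_of_injective, card_image_of_injective, card_image_of_injective,
    card_erase_of_mem (a := (⊤ : α)), card_erase_of_mem (mem_univ _), card_univ]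
  · have : 1 < Fintype.card α := Fintype.one_lt_card
    omega
  · simp [hbt.symm]
  · intro a b; simp
  · intro a b; simp
  · intro a b; simp
  · rw [disjoint_left]; rintro ⟨f, g⟩; simp; grind
  · rw [disjoint_left]; rintro ⟨f, g⟩; simp; grind
  · rw [disjoint_left]; rintro ⟨f, g⟩; simp [hA]; grind

open Finset in
theorem aux_pi {n : ℕ} {β : Type*} [Fintype β] [DecidableEq β] (Q : Finset (β × β))
    (R : Finset ((Fin n → β) × (Fin n → β))) (hR : ∀ p, p ∈ R ↔ ∀ i, (p.1 i, p.2 i) ∈ Q) :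
    R.card = Q.card ^ n := by
  have h := Fintype.card_piFinset_const Q n
  rw [← h]
  refine card_bij' (fun p _ i => (p.1 i, p.2 i))
    (fun q _ => (fun i => (q i).1, fun i => (q i).2)) ?_ ?_ ?_ ?_
  · intro p hp; simpa [hR] using hp
  · intro q hq; simpa [hR] using hq
  · intro p hp; rfl
  · intro q hq; rfl

open Finset in
theorem aux_le (m : ℕ) :
    (univ.filter (fun p : Fin m × Fin m => p.1 ≤ p.2)).card = m * (m + 1) / 2 := by
  have h : (univ.filter (fun p : Fin m × Fin m => p.1 ≤ p.2)).card =
      ∑ j : Fin m, ((j : ℕ) + 1) := by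
    rw [card_filter, ← univ_product_univ, sum_product_right]
    refine sum_congr rfl fun j _ => ?_
    rw [← card_filter]
    have : univ.filter (fun i : Fin m => i ≤ j) = Iic j := by ext; simp
    rw [this, Fin.card_Iic]
  rw [h, Fin.sum_univ_eq_sum_range (fun j => j + 1) m]
  have := sum_range_succ' (fun j => j) m
  have h2 := sum_range_id (m + 1)
  simp only [add_zero, add_tsub_cancel_right] at this h2
  rw [← this, h2, mul_comm]

open Finset in
theorem tauF_four_open_sets (n m : ℕ) (hn : 1 ≤ n) (hm : 2 ≤ m) :
    (tauF n m 4 (by omega) : ℤ) =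
      ((m * (m + 1) / 2 : ℕ) : ℤ) ^ n - 3 * (m : ℤ) ^ n + 2 ^ (n - 1) + 2 := by
  classical
  obtain ⟨k, rfl⟩ : ∃ k, m = k + 2 := ⟨m - 2, by omega⟩
  obtain ⟨l, rfl⟩ : ∃ l, n = l + 1 := ⟨n - 1, by omega⟩
  let S : Finset (Finset (Fin (l + 1) → Fin (k + 2))) := univ.filter fun τ => IsFuzzyTopology (by omega) τ ∧ τ.card = 4
  let L : Finset ((Fin (l + 1) → Fin (k + 2)) × (Fin (l + 1) → Fin (k + 2))) := univ.filter fun p => p.1 ≤ p.2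
  let A : Finset ((Fin (l + 1) → Fin (k + 2)) × (Fin (l + 1) → Fin (k + 2))) := univ.filter fun p => p.1 ≠ ⊥ ∧ p.2 ≠ ⊤ ∧ p.1 < p.2
  let B : Finset ((Fin (l + 1) → Fin (k + 2)) × (Fin (l + 1) → Fin (k + 2))) := univ.filter fun p => IsCompl p.1 p.2
  let B' : Finset ((Fin (l + 1) → Fin (k + 2)) × (Fin (l + 1) → Fin (k + 2))) := (B.erase (⊥, ⊤)).erase (⊤, ⊥)
  let P : Finset ((Fin (l + 1) → Fin (k + 2)) × (Fin (l + 1) → Fin (k + 2))) := A ∪ (A.map (Equiv.prodComm (Fin (l + 1) → Fin (k + 2)) (Fin (l + 1) → Fin (k + 2))).toEmbedding ∪ B')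
  have hbt : (⊥ : (Fin (l + 1) → Fin (k + 2))) ≠ ⊤ := bot_ne_top
  have hA : ∀ p, p ∈ A ↔ p.1 ≠ ⊥ ∧ p.2 ≠ ⊤ ∧ p.1 < p.2 := by simp [A]
  have hA' : ∀ p, p ∈ A.map (Equiv.prodComm (Fin (l + 1) → Fin (k + 2)) (Fin (l + 1) → Fin (k + 2))).toEmbedding ↔
      p.2 ≠ ⊥ ∧ p.1 ≠ ⊤ ∧ p.2 < p.1 := by
    rintro ⟨f, g⟩
    rw [mem_map_equiv]
    simp [hA]
  have hB' : ∀ p, p ∈ B' ↔ IsCompl p.1 p.2 ∧ p.1 ≠ ⊥ ∧ p.1 ≠ ⊤ ∧ p.2 ≠ ⊥ ∧ p.2 ≠ ⊤ := by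
    rintro ⟨f, g⟩
    simp only [B', B, mem_erase, mem_filter, mem_univ, true_and, ne_eq, Prod.mk.injEq]
    constructor
    · rintro ⟨h1, h2, h3⟩
      refine ⟨h3, ?_, ?_, ?_, ?_⟩ <;> rintro rfl
      · exact h2 ⟨rfl, by simpa using h3.sup_eq_top⟩
      · exact h1 ⟨rfl, by simpa using h3.inf_eq_bot⟩
      · exact h1 ⟨by simpa using h3.sup_eq_top, rfl⟩
      · exact h2 ⟨by simpa using h3.inf_eq_bot, rfl⟩
    · tauto
  have hcompl : ∀ f g : (Fin (l + 1) → Fin (k + 2)), IsCompl f g → f ≠ ⊥ → g ≠ ⊥ → ¬ f ≤ g ∧ ¬ g ≤ f := by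
    intro f g h hf hg
    have := h.inf_eq_bot
    refine ⟨fun h' => hf ?_, fun h' => hg ?_⟩
    · rwa [inf_eq_left.2 h'] at this
    · rwa [inf_eq_right.2 h'] at this
  have hPS : P.card = 2 * S.card := by
    apply aux_double
    · intro τ
      simp only [S, mem_filter, mem_univ, true_and]
      rfl
    · rintro ⟨f, g⟩
      simp only [P, mem_union, hA, hA', hB']
      constructor
      · rintro (⟨h1, h2, h3⟩ | ⟨h1, h2, h3⟩ | ⟨h1, h2, h3, h4, h5⟩)
        · exact ⟨h3.ne, h1, (h3.trans_le le_top).ne, (bot_le.trans_lt h3).ne', h2, Or.inl h3.le⟩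
        · exact ⟨h3.ne', (bot_le.trans_lt h3).ne', h2, h1, (h3.trans_le le_top).ne,
            Or.inr (Or.inl h3.le)⟩
        · exact ⟨fun h => (hcompl f g h1 h2 h4).1 h.le, h2, h3, h4, h5, Or.inr (Or.inr h1)⟩
      · rintro ⟨h1, h2, h3, h4, h5, h6 | h6 | h6⟩
        · exact Or.inl ⟨h2, h5, lt_of_le_of_ne h6 h1⟩
        · exact Or.inr (Or.inl ⟨h4, h3, lt_of_le_of_ne h6 h1.symm⟩)
        · exact Or.inr (Or.inr ⟨h6, h2, h3, h4, h5⟩)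
  have hPc : P.card = A.card + (A.card + B'.card) := by
    simp only [P]
    rw [card_union_of_disjoint, card_union_of_disjoint, card_map]
    · rw [disjoint_left]
      rintro ⟨f, g⟩ h h'
      rw [hA'] at h
      rw [hB'] at h'
      exact (hcompl f g h'.1 h'.2.1 h'.2.2.2.1).2 h.2.2.le
    · rw [disjoint_left]
      rintro ⟨f, g⟩ h h'
      rw [mem_union, hA', hB'] at h'
      rw [hA] at h
      rcases h' with h' | h'
      · exact lt_asymm h.2.2 h'.2.2
      · exact (hcompl f g h'.1 h'.2.1 h'.2.2.2.1).1 h.2.2.le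
  have hLc : L.card = ((k + 2) * (k + 2 + 1) / 2) ^ (l + 1) := by
    rw [← aux_le]
    apply aux_pi
    intro p
    simp [L, Pi.le_def]
  have hBc : B.card = 2 ^ (l + 1) := by
    have h2 : ({(⊥, ⊤), (⊤, ⊥)} : Finset (Fin (k + 2) × Fin (k + 2))).card = 2 := by
      apply card_pair
      simp
    refine (aux_pi {(⊥, ⊤), (⊤, ⊥)} B ?_).trans (congrArg (fun x => x ^ (l + 1)) h2)
    intro p
    simp only [B, mem_filter, mem_univ, true_and, Pi.isCompl_iff, mem_insert, mem_singleton,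
      Prod.mk.injEq]
    refine forall_congr' fun i => ?_
    constructor
    · intro h
      have a := h.inf_eq_bot
      have b := h.sup_eq_top
      rcases le_total (p.1 i) (p.2 i) with h | h
      · simp only [h, inf_of_le_left, sup_of_le_right] at a b
        exact Or.inl ⟨a, b⟩
      · simp only [h, inf_of_le_right, sup_of_le_left] at a b
        exact Or.inr ⟨b, a⟩
    · rintro (⟨h1, h2⟩ | ⟨h1, h2⟩) <;> rw [h1, h2]
      · exact isCompl_bot_top
      · exact isCompl_top_bot
  have hBB : B'.card + 2 = B.card := by
    have e1 : ((⊥ : (Fin (l + 1) → Fin (k + 2))), (⊤ : (Fin (l + 1) → Fin (k + 2)))) ∈ B := by simpa [B] using isCompl_bot_top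
    have e2 : ((⊤ : (Fin (l + 1) → Fin (k + 2))), (⊥ : (Fin (l + 1) → Fin (k + 2)))) ∈ B.erase (⊥, ⊤) := by
      simpa [B, hbt.symm] using isCompl_top_bot
    have c1 := card_erase_add_one e1
    have c2 := card_erase_add_one e2
    simp only [B']
    omega
  have hLA := aux_chain L A (by simp [L]) hA
  have hcardF : Fintype.card (Fin (l + 1) → Fin (k + 2)) = (k + 2) ^ (l + 1) := by simp
  have hT : tauF (l + 1) (k + 2) 4 (by omega) = S.card := by
    unfold tauF
    rw [Nat.card_eq_fintype_card, Fintype.card_subtype]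
  rw [hT, add_tsub_cancel_right]
  rw [hLc, hcardF] at hLA
  rw [hBc, pow_succ] at hBB
  rw [hPc] at hPS
  zify at hLA hBB hPS
  push_cast at hLA hBB hPS ⊢
  linarith
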